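/- Existence of conditional typical subspace projectors. All Hilbert spaces are finite-dimensional and complex. A state on $H$ is a positive semidefinite operator on $H$ of trace one; $\mathcal S(H)$ is the set of states on $H$. Write $S(\rho) := -\mathrm{tr}(\rho\log_2\rho)$, and for a map $V : A \to \mathcal S(H)$ on a finite set $A$ (a classical-quantum channel) and a probability distribution $P$ on $A$ write $S(V|P) := \sum_{a\in A} P(a)\,S(V(a))$ and $V^{\otimes n}(x^n) := V(x_1)\otimes\cdots\otimes V(x_n)$ on $H^{\otimes n}$. A sequence $x^n \in A^n$ has type $P$ if every $b \in A$ occurs exactly $nP(b)$ times in it. For self-adjoint operators, $X \le Y$ means that $Y - X$ is positive semidefinite. There is a universal constant $K > 0$ such that for every finite set $A$ with $a := |A|$, every finite-dimensional complex Hilbert space $H$ with $d := \dim H$, every classical-quantum channel $V : A \to \mathcal S(H)$, every probability distribution $P$ on $A$, every $n \in \mathbb N$ with $n \ge 1$, every $\alpha > 0$, and every sequence $x^n \in A^n$ of type $P$, there exists an orthogonal projection $\Pi(x^n)$ on $H^{\otimes n}$ commuting with $V^{\otimes n}(x^n)$ and satisfying: (i) $\mathrm{tr}\big(V^{\otimes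 n}(x^n)\,\Pi(x^n)\big) \ge 1 - \frac{a d}{4\alpha^2}$; (ii) $\mathrm{tr}\big(\Pi(x^n)\big) \le 2^{\,n S(V|P) + K a d \alpha \sqrt n}$; (iii) $\Pi(x^n)\, V^{\otimes n}(x^n)\, \Pi(x^n) \le 2^{-n S(V|P) + K a d \alpha \sqrt n}\,\Pi(x^n)$. -/

import Mathlib

open scoped ComplexOrder MatrixOrder

noncomputable section

/-- A quantum state on the Hilbert space `ℂ^ι`: a positive semidefinite operator of trace one. -/
def IsState {ι : Type*} [Fintype ι] (ρ : Matrix ι ι ℂ) : Prop :=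
  ρ.PosSemidef ∧ ρ.trace = 1

/-- The von Neumann entropy `S(ρ) = -tr(ρ log₂ ρ)`, where `log₂ ρ` is given by the functional
calculus of the self-adjoint operator `ρ`. As `Real.logb 2 0 = 0`, the convention
`0 log₂ 0 = 0` holds. -/
def vnEntropy {ι : Type*} [Fintype ι] [DecidableEq ι] (ρ : Matrix ι ι ℂ) : ℝ :=
  -(ρ * cfc (Real.logb 2) ρ).trace.re

/-- The conditional entropy `S(V|P) = ∑ₐ P(a) S(V(a))` of a classical-quantum channel. -/
def condEntropy {A ι : Type*} [Fintype A] [Fintype ι] [DecidableEq ι]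
    (V : A → Matrix ι ι ℂ) (P : A → ℝ) : ℝ :=
  ∑ a, P a * vnEntropy (V a)

/-- The `n`-fold extension `V^{⊗n}(xⁿ) = V(x₁) ⊗ ⋯ ⊗ V(xₙ)` of a classical-quantum channel.
The space `(ℂ^ι)^{⊗n}` is `ℂ^(Fin n → ι)`, through the basis of product vectors
`e_{i₁} ⊗ ⋯ ⊗ e_{iₙ}`. -/
def cqPow {A ι : Type*} (V : A → Matrix ι ι ℂ) {n : ℕ} (x : Fin n → A) :
    Matrix (Fin n → ι) (Fin n → ι) ℂ :=
  Matrix.of fun i j => ∏ k, V (x k) (i k) (j k)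

/-- The sequence `xⁿ` has type `P`: every letter `a` occurs exactly `n P(a)` times in it. -/
def HasType {A : Type*} [DecidableEq A] {n : ℕ} (x : Fin n → A) (P : A → ℝ) : Prop :=
  ∀ a : A, ((Finset.univ.filter fun k => x k = a).card : ℝ) = n * P a

end

/-! The eigenvalues of a state form a probability distribution, and the eigenvalue distribution of
a tensor product of states is the product distribution. The logarithm of an eigenvalue of
`V^{⊗n}(xⁿ)` is thus a sum of independent random variables, with mean `-n S(V|P)` when `xⁿ` has
type `P`, and with variance `O(n d)` because `t (log t)²` is bounded on `[0, 1]`. Project onto the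
eigenvectors whose surprisal `-log₂ λ` is within `L = O(a d α √n)` of its mean: Chebyshev's
inequality gives (i), each of these eigenvalues being at least `2^{-n S(V|P) - L}` while their sum
is at most `1` gives (ii), and each being at most `2^{-n S(V|P) + L}` gives (iii). -/

open MeasureTheory ProbabilityTheory Matrix Unitary

lemma mul_logb_sq_le (b : ℝ) {t : ℝ} (ht₀ : 0 ≤ t) (ht₁ : t ≤ 1) :
    t * Real.logb b t ^ 2 ≤ (2 / Real.log b) ^ 2 := by
  obtain rfl | ht := ht₀.eq_or_lt
  · simpa using sq_nonneg (2 / Real.log b)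
  have hlog : |Real.log t * √t| ≤ 2 := by
    simpa [Real.sqrt_eq_rpow] using
      (Real.abs_log_mul_self_rpow_lt t (1 / 2) ht ht₁ one_half_pos).le
  calc t * Real.logb b t ^ 2 = (Real.log t * √t) ^ 2 / Real.log b ^ 2 := by
        rw [Real.logb, mul_pow, Real.sq_sqrt ht₀]; ring
    _ ≤ 2 ^ 2 / Real.log b ^ 2 := by
        gcongr ?_ / _
        exact sq_le_sq' (abs_le.1 hlog).1 (abs_le.1 hlog).2
    _ = (2 / Real.log b) ^ 2 := (div_pow _ _ _).symm

section Surprisal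

variable {Ω : Type*} [MeasurableSpace Ω]

/-- The surprisal (self-information) `-log₂ μ{ω}` of an outcome of a discrete distribution. It is
`0`, not `∞`, at outcomes of probability zero. -/
noncomputable def surprisal (μ : Measure Ω) (ω : Ω) : ℝ :=
  -Real.logb 2 (μ.real {ω})

/-- The Shannon entropy in bits of a discrete distribution, encoded as the mean surprisal. -/
noncomputable def shannonEntropy (μ : Measure Ω) : ℝ :=
  μ[surprisal μ]

open Classical in
/-- The outcomes of positive probability whose surprisal is at distance less than `L` from the
entropy. -/
noncomputable def typicalSet [Fintype Ω] (μ : Measure Ω) (L : ℝ) : Finset Ω :=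
  {ω | 0 < μ.real {ω} ∧ |surprisal μ ω - shannonEntropy μ| < L}

variable {μ : Measure Ω} {L : ℝ} {ω : Ω}

lemma real_singleton_eq_two_rpow_neg_surprisal (h : 0 < μ.real {ω}) :
    μ.real {ω} = 2 ^ (-surprisal μ ω) := by
  rw [surprisal, neg_neg, Real.rpow_logb two_pos (by norm_num) h]

section Fintype

variable [Fintype Ω]

lemma mem_typicalSet :
    ω ∈ typicalSet μ L ↔ 0 < μ.real {ω} ∧ |surprisal μ ω - shannonEntropy μ| < L := by
  simp [typicalSet]

lemma real_singleton_le_of_mem_typicalSet (h : ω ∈ typicalSet μ L) :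
    μ.real {ω} ≤ 2 ^ (-shannonEntropy μ + L) := by
  obtain ⟨hpos, hdev⟩ := mem_typicalSet.1 h
  rw [real_singleton_eq_two_rpow_neg_surprisal hpos]
  exact Real.rpow_le_rpow_of_exponent_le one_le_two (by linarith [(abs_lt.1 hdev).1])

lemma le_real_singleton_of_mem_typicalSet (h : ω ∈ typicalSet μ L) :
    2 ^ (-(shannonEntropy μ + L)) ≤ μ.real {ω} := by
  obtain ⟨hpos, hdev⟩ := mem_typicalSet.1 h
  rw [real_singleton_eq_two_rpow_neg_surprisal hpos]
  exact Real.rpow_le_rpow_of_exponent_le one_le_two (by linarith [(abs_lt.1 hdev).2])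

variable [MeasurableSingletonClass Ω] [IsProbabilityMeasure μ]

lemma card_typicalSet_le : ((typicalSet μ L).card : ℝ) ≤ 2 ^ (shannonEntropy μ + L) := by
  suffices h : (typicalSet μ L).card * (2 : ℝ) ^ (-(shannonEntropy μ + L)) ≤ 1 by
    rwa [Real.rpow_neg two_pos.le, ← div_eq_mul_inv, div_le_one (by positivity)] at h
  calc (typicalSet μ L).card * (2 : ℝ) ^ (-(shannonEntropy μ + L))
      = ∑ _ω ∈ typicalSet μ L, (2 : ℝ) ^ (-(shannonEntropy μ + L)) := by
        rw [Finset.sum_const, nsmul_eq_mul]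
    _ ≤ ∑ ω ∈ typicalSet μ L, μ.real {ω} :=
        Finset.sum_le_sum fun _ => le_real_singleton_of_mem_typicalSet
    _ = μ.real (typicalSet μ L) := sum_measureReal_singleton _
    _ ≤ 1 := measureReal_le_one

lemma one_sub_variance_div_sq_le_real_typicalSet (hL : 0 < L) :
    1 - Var[surprisal μ; μ] / L ^ 2 ≤ μ.real (typicalSet μ L) := by
  have hcheb : μ.real {ω | L ≤ |surprisal μ ω - shannonEntropy μ|} ≤
      Var[surprisal μ; μ] / L ^ 2 :=
    ENNReal.toReal_le_of_le_ofReal (div_nonneg (variance_nonneg _ _) (sq_nonneg L))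
      (meas_ge_le_variance_div_sq .of_discrete hL)
  have hcompl : μ.real (typicalSet μ L : Set Ω)ᶜ ≤
      μ.real {ω | L ≤ |surprisal μ ω - shannonEntropy μ|} := by
    refine ENNReal.toReal_mono (measure_ne_top _ _) (measure_mono_ae ?_)
    refine ae_iff_of_countable.2 fun ω hω hmem => ?_
    have hpos : 0 < μ.real {ω} := ENNReal.toReal_pos hω (measure_ne_top _ _)
    exact not_lt.1 fun hlt => hmem (mem_typicalSet.2 ⟨hpos, hlt⟩)
  rw [probReal_compl_eq_one_sub (Finset.measurableSet _)] at hcompl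
  linarith

lemma variance_surprisal_le :
    Var[surprisal μ; μ] ≤ Fintype.card Ω * (2 / Real.log 2) ^ 2 :=
  calc Var[surprisal μ; μ] ≤ μ[surprisal μ ^ 2] :=
        variance_le_expectation_sq .of_discrete
    _ = ∑ ω, μ.real {ω} * Real.logb 2 (μ.real {ω}) ^ 2 := by
        simp [integral_fintype .of_finite, surprisal]
    _ ≤ ∑ _ω : Ω, (2 / Real.log 2) ^ 2 :=
        Finset.sum_le_sum fun _ _ => mul_logb_sq_le 2 measureReal_nonneg measureReal_le_one
    _ = Fintype.card Ω * (2 / Real.log 2) ^ 2 := by simp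

end Fintype

end Surprisal

section PiMeasure

variable {κ : Type*} [Fintype κ] {Ω : κ → Type*} [∀ k, MeasurableSpace (Ω k)]
  (μ : ∀ k, Measure (Ω k))

lemma real_pi_singleton [∀ k, SigmaFinite (μ k)] (ω : ∀ k, Ω k) :
    (Measure.pi μ).real {ω} = ∏ k, (μ k).real {ω k} := by
  simp [measureReal_def]

variable [∀ k, IsProbabilityMeasure (μ k)]

lemma surprisal_pi_ae_eq [∀ k, Countable (Ω k)] :
    surprisal (Measure.pi μ) =ᵐ[Measure.pi μ] ∑ k, fun ω => surprisal (μ k) (ω k) := by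
  refine ae_iff_of_countable.2 fun ω hω => ?_
  have hne : ∏ k, (μ k).real {ω k} ≠ 0 := by
    rw [← real_pi_singleton]
    exact (ENNReal.toReal_pos hω (measure_ne_top _ _)).ne'
  rw [surprisal, real_pi_singleton, Real.logb_prod _ _ (Finset.prod_ne_zero_iff.1 hne)]
  simp [surprisal]

variable [∀ k, Finite (Ω k)] [∀ k, MeasurableSingletonClass (Ω k)]

lemma shannonEntropy_pi : shannonEntropy (Measure.pi μ) = ∑ k, shannonEntropy (μ k) := by
  rw [shannonEntropy, integral_congr_ae (surprisal_pi_ae_eq μ)]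
  simp only [Finset.sum_apply]
  rw [integral_finsetSum _ fun _ _ => .of_finite]
  exact Finset.sum_congr rfl fun k _ => integral_comp_eval .of_discrete

lemma variance_surprisal_pi :
    Var[surprisal (Measure.pi μ); Measure.pi μ] = ∑ k, Var[surprisal (μ k); μ k] := by
  rw [variance_congr (surprisal_pi_ae_eq μ), variance_sum_pi fun _ => .of_discrete]

end PiMeasure

section ColumnProjection

variable {σ R : Type*} [Fintype σ] [DecidableEq σ] [CommRing R] [StarRing R]
  (U : unitaryGroup σ R) (T : Finset σ)

lemma trace_conjStarAlgAut (M : Matrix σ σ R) : (conjStarAlgAut R _ U M).trace = M.trace := by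
  rw [conjStarAlgAut_apply, trace_mul_cycle, coe_star_mul_self, one_mul]

/-- The orthogonal projection onto the span of the columns of the unitary matrix `U` indexed by
`T`. -/
def columnProjection : Matrix σ σ R :=
  conjStarAlgAut R _ U (diagonal fun i => if i ∈ T then 1 else 0)

lemma isStarProjection_columnProjection : IsStarProjection (columnProjection U T) := by
  refine IsStarProjection.map (f := conjStarAlgAut R _ U) ⟨?_, ?_⟩
  · simp +contextual [IsIdempotentElem]
  · simp [IsSelfAdjoint, star_eq_conjTranspose, diagonal_conjTranspose, Pi.star_def, apply_ite]

lemma commute_columnProjection (v : σ → R) :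
    Commute (columnProjection U T) (conjStarAlgAut R _ U (diagonal v)) :=
  (commute_diagonal _ _).map (conjStarAlgAut R _ U)

lemma trace_columnProjection : (columnProjection U T).trace = T.card := by
  rw [columnProjection, trace_conjStarAlgAut]
  simp

lemma trace_conjStarAlgAut_mul_columnProjection (v : σ → R) :
    (conjStarAlgAut R _ U (diagonal v) * columnProjection U T).trace = ∑ i ∈ T, v i := by
  rw [columnProjection, ← map_mul, trace_conjStarAlgAut]
  simp

lemma columnProjection_mul_mul_le {𝕜 : Type*} [RCLike 𝕜] {U : unitaryGroup σ 𝕜} {T : Finset σ}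
    {q : σ → ℝ} {c : ℝ} (hq : ∀ i ∈ T, q i ≤ c) :
    columnProjection U T * conjStarAlgAut 𝕜 _ U (diagonal fun i => (q i : 𝕜)) *
      columnProjection U T ≤ c • columnProjection U T := by
  rw [columnProjection, ← map_mul, ← map_mul, RCLike.real_smul_eq_coe_smul (K := 𝕜), ← map_smul]
  refine OrderHomClass.mono (conjStarAlgAut 𝕜 _ U) ?_
  rw [diagonal_mul_diagonal, diagonal_mul_diagonal, ← diagonal_smul, Matrix.le_iff, diagonal_sub]
  refine PosSemidef.diagonal fun i => ?_
  by_cases hi : i ∈ T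
  · simpa [hi] using hq i hi
  · simp [hi]

end ColumnProjection

/-- `E` is an `(L, ε)`-typical projection for the state `ρ` at entropy `s`: it commutes with `ρ`,
misses at most `ε` of its mass, has rank at most `2 ^ (s + L)`, and `ρ` is at most `2 ^ (-s + L)`
on its range. -/
structure IsTypicalProjection {σ : Type*} [Fintype σ] (ρ : Matrix σ σ ℂ) (s L ε : ℝ)
    (E : Matrix σ σ ℂ) : Prop where
  isStarProjection : IsStarProjection E
  commute : Commute E ρ
  one_sub_le_trace : 1 - ε ≤ (ρ * E).trace.re
  trace_le : E.trace.re ≤ 2 ^ (s + L)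
  compression_le : E * ρ * E ≤ (2 : ℝ) ^ (-s + L) • E

lemma isTypicalProjection_columnProjection {σ : Type*} [Fintype σ] [DecidableEq σ]
    [MeasurableSpace σ] [MeasurableSingletonClass σ] (U : unitaryGroup σ ℂ) (μ : Measure σ)
    [IsProbabilityMeasure μ] {L ε : ℝ} (hL : 0 < L) (hε : Var[surprisal μ; μ] / L ^ 2 ≤ ε) :
    IsTypicalProjection (conjStarAlgAut ℂ _ U (diagonal fun i => (μ.real {i} : ℂ)))
      (shannonEntropy μ) L ε (columnProjection U (typicalSet μ L)) where
  isStarProjection := isStarProjection_columnProjection U _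
  commute := commute_columnProjection U _ _
  one_sub_le_trace := by
    rw [trace_conjStarAlgAut_mul_columnProjection, ← Complex.ofReal_sum, Complex.ofReal_re,
      sum_measureReal_singleton]
    linarith [one_sub_variance_div_sq_le_real_typicalSet (μ := μ) hL]
  trace_le := by
    rw [trace_columnProjection, Complex.natCast_re]
    exact card_typicalSet_le
  compression_le := columnProjection_mul_mul_le fun _ => real_singleton_le_of_mem_typicalSet

section PiKronecker

variable {κ : Type*} [Fintype κ] {l m n : κ → Type*} {R : Type*} [CommSemiring R]

/-- The Kronecker product of a finite family of matrices, indexed by families of indices. -/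
def piKronecker (M : ∀ k, Matrix (m k) (n k) R) : Matrix (∀ k, m k) (∀ k, n k) R :=
  Matrix.of fun i j => ∏ k, M k (i k) (j k)

lemma piKronecker_mul [DecidableEq κ] [∀ k, Fintype (m k)] (M : ∀ k, Matrix (l k) (m k) R)
    (N : ∀ k, Matrix (m k) (n k) R) :
    piKronecker (fun k => M k * N k) = piKronecker M * piKronecker N := by
  ext i j
  simp [piKronecker, mul_apply, Fintype.prod_sum, Finset.prod_mul_distrib]

lemma conjTranspose_piKronecker [StarRing R] (M : ∀ k, Matrix (m k) (n k) R) :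
    (piKronecker M)ᴴ = piKronecker fun k => (M k)ᴴ := by
  ext i j
  simp [piKronecker]

lemma piKronecker_diagonal [∀ k, DecidableEq (m k)] [DecidableEq (∀ k, m k)]
    (v : ∀ k, m k → R) :
    piKronecker (fun k => diagonal (v k)) = diagonal fun i => ∏ k, v k (i k) := by
  ext i j
  obtain rfl | hij := eq_or_ne i j
  · simp [piKronecker]
  · obtain ⟨k, hk⟩ := Function.ne_iff.1 hij
    rw [diagonal_apply_ne _ hij]
    exact Finset.prod_eq_zero (Finset.mem_univ k) (diagonal_apply_ne _ hk)

lemma piKronecker_one [∀ k, DecidableEq (m k)] [DecidableEq (∀ k, m k)] :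
    piKronecker (fun k => (1 : Matrix (m k) (m k) R)) = 1 := by
  simpa using piKronecker_diagonal fun (k : κ) (_ : m k) => (1 : R)

end PiKronecker

section Unitary

variable {κ : Type*} [Fintype κ] [DecidableEq κ] {m : κ → Type*} [∀ k, Fintype (m k)]
  [∀ k, DecidableEq (m k)] {R : Type*} [CommRing R] [StarRing R]

lemma piKronecker_mem_unitaryGroup (U : ∀ k, unitaryGroup (m k) R) :
    piKronecker (fun k => (U k : Matrix (m k) (m k) R)) ∈ unitaryGroup (∀ k, m k) R := by
  rw [mem_unitaryGroup_iff, star_eq_conjTranspose, conjTranspose_piKronecker, ← piKronecker_mul]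
  simp [← star_eq_conjTranspose, piKronecker_one]

lemma piKronecker_conjStarAlgAut_diagonal (U : ∀ k, unitaryGroup (m k) R) (v : ∀ k, m k → R) :
    piKronecker (fun k => conjStarAlgAut R _ (U k) (diagonal (v k))) =
      conjStarAlgAut R _ ⟨_, piKronecker_mem_unitaryGroup U⟩
        (diagonal fun i => ∏ k, v k (i k)) := by
  simp [← piKronecker_diagonal, piKronecker_mul, star_eq_conjTranspose, conjTranspose_piKronecker]

end Unitary

section State

variable {ι : Type*} [Fintype ι] {ρ : Matrix ι ι ℂ}

lemma IsState.nonempty (hρ : IsState ρ) : Nonempty ι := by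
  by_contra hι
  rw [not_nonempty_iff] at hι
  simpa using hρ.2

variable [DecidableEq ι]

lemma IsState.sum_eigenvalues (hρ : IsState ρ) : ∑ i, hρ.1.1.eigenvalues i = 1 := by
  apply Complex.ofReal_injective
  calc ((∑ i, hρ.1.1.eigenvalues i : ℝ) : ℂ) = ∑ i, (hρ.1.1.eigenvalues i : ℂ) :=
        Complex.ofReal_sum _ _
    _ = ρ.trace := hρ.1.1.trace_eq_sum_eigenvalues.symm
    _ = (1 : ℝ) := by rw [hρ.2, Complex.ofReal_one]

/-- The distribution of the outcome when the state is measured in its eigenbasis. -/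
noncomputable def IsState.spectralPMF (hρ : IsState ρ) : PMF ι :=
  PMF.ofFintype (fun i => ENNReal.ofReal (hρ.1.1.eigenvalues i)) <| by
    rw [← ENNReal.ofReal_sum_of_nonneg fun i _ => hρ.1.eigenvalues_nonneg i, hρ.sum_eigenvalues,
      ENNReal.ofReal_one]

lemma vnEntropy_eq_neg_sum_eigenvalues (hρ : ρ.IsHermitian) :
    vnEntropy ρ = -∑ i, hρ.eigenvalues i * Real.logb 2 (hρ.eigenvalues i) := by
  have hmul : ρ * cfc (Real.logb 2) ρ = conjStarAlgAut ℂ _ hρ.eigenvectorUnitary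
      (diagonal fun i => ((hρ.eigenvalues i * Real.logb 2 (hρ.eigenvalues i) : ℝ) : ℂ)) := by
    rw [hρ.cfc_eq, IsHermitian.cfc]
    nth_rw 1 [hρ.spectral_theorem]
    rw [← map_mul, diagonal_mul_diagonal]
    simp
  rw [vnEntropy, hmul, trace_conjStarAlgAut, trace_diagonal, ← Complex.ofReal_sum,
    Complex.ofReal_re]

variable [MeasurableSpace ι] [MeasurableSingletonClass ι]

lemma IsState.real_spectralPMF_singleton (hρ : IsState ρ) (i : ι) :
    hρ.spectralPMF.toMeasure.real {i} = hρ.1.1.eigenvalues i := by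
  rw [measureReal_def, PMF.toMeasure_apply_singleton _ _ (measurableSet_singleton i), spectralPMF,
    PMF.ofFintype_apply, ENNReal.toReal_ofReal (hρ.1.eigenvalues_nonneg i)]

lemma IsState.eq_conjStarAlgAut (hρ : IsState ρ) :
    ρ = conjStarAlgAut ℂ _ hρ.1.1.eigenvectorUnitary
      (diagonal fun i => (hρ.spectralPMF.toMeasure.real {i} : ℂ)) := by
  simp_rw [hρ.real_spectralPMF_singleton]
  exact hρ.1.1.spectral_theorem

lemma IsState.vnEntropy_eq_shannonEntropy (hρ : IsState ρ) :
    vnEntropy ρ = shannonEntropy hρ.spectralPMF.toMeasure := by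
  rw [vnEntropy_eq_neg_sum_eigenvalues hρ.1.1, shannonEntropy, integral_fintype .of_finite]
  simp [surprisal, hρ.real_spectralPMF_singleton]

end State

section ProductState

variable {κ : Type*} [Fintype κ] [DecidableEq κ] {ι : κ → Type*} [∀ k, Fintype (ι k)]
  [∀ k, DecidableEq (ι k)] {ρ : ∀ k, Matrix (ι k) (ι k) ℂ}

lemma piKronecker_eq_conjStarAlgAut [∀ k, MeasurableSpace (ι k)]
    [∀ k, MeasurableSingletonClass (ι k)] (hρ : ∀ k, IsState (ρ k)) :
    piKronecker ρ = conjStarAlgAut ℂ _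
      ⟨_, piKronecker_mem_unitaryGroup fun k => (hρ k).1.1.eigenvectorUnitary⟩
      (diagonal fun i => ((Measure.pi fun k => (hρ k).spectralPMF.toMeasure).real {i} : ℂ)) := by
  refine (congrArg piKronecker (funext fun k => (hρ k).eq_conjStarAlgAut)).trans ?_
  simp_rw [real_pi_singleton, Complex.ofReal_prod]
  exact piKronecker_conjStarAlgAut_diagonal _ _

lemma exists_isTypicalProjection_piKronecker (hρ : ∀ k, IsState (ρ k)) {L : ℝ} (hL : 0 < L) :
    ∃ E, IsTypicalProjection (piKronecker ρ) (∑ k, vnEntropy (ρ k)) L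
      ((∑ k, Fintype.card (ι k) * (2 / Real.log 2) ^ 2) / L ^ 2) E := by
  let _ : ∀ k, MeasurableSpace (ι k) := fun _ => ⊤
  let μ : ∀ k, Measure (ι k) := fun k => (hρ k).spectralPMF.toMeasure
  have hentropy : ∑ k, vnEntropy (ρ k) = shannonEntropy (Measure.pi μ) := by
    rw [shannonEntropy_pi]
    exact Finset.sum_congr rfl fun k _ => (hρ k).vnEntropy_eq_shannonEntropy
  have hvar : Var[surprisal (Measure.pi μ); Measure.pi μ] ≤
      ∑ k, Fintype.card (ι k) * (2 / Real.log 2) ^ 2 := by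
    rw [variance_surprisal_pi]
    exact Finset.sum_le_sum fun _ _ => variance_surprisal_le
  rw [piKronecker_eq_conjStarAlgAut hρ, hentropy]
  exact ⟨_, isTypicalProjection_columnProjection _ _ hL (by gcongr)⟩

end ProductState

lemma cqPow_eq_piKronecker {A ι : Type*} (V : A → Matrix ι ι ℂ) {n : ℕ} (x : Fin n → A) :
    cqPow V x = piKronecker fun k => V (x k) :=
  rfl

lemma HasType.sum_comp {A : Type*} [Fintype A] [DecidableEq A] {n : ℕ} {x : Fin n → A} {P : A → ℝ}
    (hx : HasType x P) (f : A → ℝ) : ∑ k, f (x k) = n * ∑ a, P a * f a := by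
  rw [← Finset.sum_fiberwise' _ x, Finset.mul_sum]
  refine Finset.sum_congr rfl fun a _ => ?_
  rw [Finset.sum_const, nsmul_eq_mul, hx a, mul_assoc]

lemma chebyshev_error_le {n a d c α : ℝ} (hn : 0 < n) (ha : 1 ≤ a) (hd : 1 ≤ d) (hc : 0 < c)
    (hα : 0 < α) :
    n * (d * c ^ 2) / (2 * c * a * d * α * √n) ^ 2 ≤ a * d / (4 * α ^ 2) :=
  calc n * (d * c ^ 2) / (2 * c * a * d * α * √n) ^ 2
      = 1 / (a ^ 2 * d) / (4 * α ^ 2) := by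
        rw [mul_pow, Real.sq_sqrt hn.le]
        field_simp
        norm_num
    _ ≤ 1 / (4 * α ^ 2) := by
        gcongr
        exact (div_le_one (by positivity)).2
          (one_le_mul_of_one_le_of_one_le (one_le_pow₀ ha) hd)
    _ ≤ a * d / (4 * α ^ 2) := by
        gcongr
        exact one_le_mul_of_one_le_of_one_le ha hd

/-- Existence of conditional typical subspace projectors. Operators are matrices with respect to
an orthonormal basis of `H`, indexed by a finite type `ι` with `d = |ι|`, and `≤` between
matrices is the Loewner order. -/
theorem conditional_typical_projector :
    ∃ K : ℝ, 0 < K ∧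
      ∀ (A : Type*) [Fintype A] [DecidableEq A] (ι : Type*) [Fintype ι] [DecidableEq ι]
        (V : A → Matrix ι ι ℂ), (∀ a, IsState (V a)) →
      ∀ P : A → ℝ, P ∈ stdSimplex ℝ A →
      ∀ n : ℕ, 1 ≤ n → ∀ α : ℝ, 0 < α →
      ∀ x : Fin n → A, HasType x P →
      ∃ E : Matrix (Fin n → ι) (Fin n → ι) ℂ,
        IsStarProjection E ∧
        Commute E (cqPow V x) ∧
        1 - (Fintype.card A : ℝ) * (Fintype.card ι : ℝ) / (4 * α ^ 2) ≤
          (cqPow V x * E).trace.re ∧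
        E.trace.re ≤
          (2 : ℝ) ^ ((n : ℝ) * condEntropy V P +
            K * (Fintype.card A : ℝ) * (Fintype.card ι : ℝ) * α * √(n : ℝ)) ∧
        E * cqPow V x * E ≤
          (2 : ℝ) ^ (-((n : ℝ) * condEntropy V P) +
            K * (Fintype.card A : ℝ) * (Fintype.card ι : ℝ) * α * √(n : ℝ)) • E := by
  have hlog : 0 < Real.log 2 := Real.log_pos one_lt_two
  refine ⟨2 * (2 / Real.log 2), by positivity, ?_⟩
  intro A _ _ ι _ _ V hV P _ n hn α hα x hx
  have : Nonempty A := ⟨x ⟨0, hn⟩⟩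
  have : Nonempty ι := (hV (x ⟨0, hn⟩)).nonempty
  have hn_pos : (0 : ℝ) < n := by exact_mod_cast hn
  have ha : (1 : ℝ) ≤ Fintype.card A := by exact_mod_cast Fintype.card_pos (α := A)
  have hd : (1 : ℝ) ≤ Fintype.card ι := by exact_mod_cast Fintype.card_pos (α := ι)
  have hentropy : ∑ k, vnEntropy (V (x k)) = n * condEntropy V P :=
    hx.sum_comp fun a => vnEntropy (V a)
  obtain ⟨E, hE⟩ := exists_isTypicalProjection_piKronecker (fun k => hV (x k))
    (L := 2 * (2 / Real.log 2) * Fintype.card A * Fintype.card ι * α * √n) (by positivity)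
  rw [← cqPow_eq_piKronecker, hentropy] at hE
  refine ⟨E, hE.isStarProjection, hE.commute, ?_, hE.trace_le, hE.compression_le⟩
  refine le_trans (sub_le_sub_left ?_ 1) hE.one_sub_le_trace
  simpa using chebyshev_error_le hn_pos ha hd (div_pos two_pos hlog) hα
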